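/- Let Θ = (θ - θ(0))/(1 - conj(θ(0))θ) be the Frostman shift of an inner function θ. Then Θ is inner, Θ(0) = 0, and the map J : f ↦ (√(1-|θ(0)|²)/(1 - conj(θ(0))θ)) f is a unitary operator from K_θ onto K_Θ satisfying J k_λ = ((1 - θ(0)conj(θ(λ)))/√(1-|θ(0)|²)) k_λ^Θ for every λ ∈ 𝔻, where k_λ^Θ is the reproducing kernel of K_Θ. -/

import Mathlib

open MeasureTheory Complex ComplexConjugate AddCircle

noncomputable section

/-- The Hardy space `H²` inside `L²` of the circle: classes whose Fourier coefficients of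
negative index vanish. -/
def hardySpace (T : ℝ) [hT : Fact (0 < T)] :
    Submodule ℂ (Lp ℂ 2 (@haarAddCircle T hT)) where
  carrier := {f | ∀ n : ℤ, n < 0 → fourierBasis.repr f n = 0}
  add_mem' := by
    intro f g hf hg n hn
    simp [map_add, hf n hn, hg n hn]
  zero_mem' := by intro n hn; simp
  smul_mem' := by
    intro c f hf n hn
    simp [_root_.map_smul, hf n hn]

/-- The subspace `θH²` of `L²` of the circle. -/
def thetaH2 (T : ℝ) [hT : Fact (0 < T)] (θ : Lp ℂ 2 (@haarAddCircle T hT)) :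
    Submodule ℂ (Lp ℂ 2 (@haarAddCircle T hT)) where
  carrier := {g | ∃ f ∈ hardySpace T, (g : AddCircle T → ℂ) =ᵐ[haarAddCircle]
    fun x => (θ : AddCircle T → ℂ) x * (f : AddCircle T → ℂ) x}
  add_mem' := by
    rintro g1 g2 ⟨f1, hf1, e1⟩ ⟨f2, hf2, e2⟩
    refine ⟨f1 + f2, add_mem hf1 hf2, ?_⟩
    filter_upwards [Lp.coeFn_add g1 g2, Lp.coeFn_add f1 f2, e1, e2] with x h1 h2 h3 h4
    simp only [Pi.add_apply, h1, h2, h3, h4]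
    ring
  zero_mem' := by
    refine ⟨0, zero_mem _, ?_⟩
    filter_upwards [Lp.coeFn_zero ℂ 2 (@haarAddCircle T hT)] with x hx
    simp [hx]
  smul_mem' := by
    rintro c g ⟨f, hf, e⟩
    refine ⟨c • f, Submodule.smul_mem _ c hf, ?_⟩
    filter_upwards [Lp.coeFn_smul c g, Lp.coeFn_smul c f, e] with x h1 h2 h3
    simp only [Pi.smul_apply, h1, h2, h3, smul_eq_mul]
    ring

/-- The model space `K_θ = H² ⊖ θH²`. -/
def modelSpace (T : ℝ) [hT : Fact (0 < T)] (θ : Lp ℂ 2 (@haarAddCircle T hT)) :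
    Submodule ℂ (Lp ℂ 2 (@haarAddCircle T hT)) :=
  hardySpace T ⊓ (thetaH2 T θ)ᗮ

/-- The analytic extension of an element of `H²` to the disk, via its Taylor/Fourier series. -/
def extDisk (T : ℝ) [hT : Fact (0 < T)] (f : Lp ℂ 2 (@haarAddCircle T hT)) (z : ℂ) : ℂ :=
  ∑' n : ℕ, fourierBasis.repr f (n : ℤ) * z ^ n

/-- `θ` is an inner function: it belongs to `H²` and has unimodular boundary values a.e. -/
def IsInner (T : ℝ) [hT : Fact (0 < T)] (θ : Lp ℂ 2 (@haarAddCircle T hT)) : Prop :=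
  θ ∈ hardySpace T ∧ ∀ᵐ x ∂(@haarAddCircle T hT), ‖(θ : AddCircle T → ℂ) x‖ = 1

section aux

variable {T : ℝ} [hT : Fact (0 < T)]

lemma exists_mulOp (θ : Lp ℂ 2 (@haarAddCircle T hT))
    (h : ∀ᵐ x ∂(@haarAddCircle T hT), ‖(θ : AddCircle T → ℂ) x‖ = 1) :
    ∃ M : Lp ℂ 2 (@haarAddCircle T hT) →ₗᵢ[ℂ] Lp ℂ 2 (@haarAddCircle T hT),
      ∀ f : Lp ℂ 2 (@haarAddCircle T hT), (M f : AddCircle T → ℂ) =ᵐ[@haarAddCircle T hT]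
        fun x => (θ : AddCircle T → ℂ) x * (f : AddCircle T → ℂ) x := by
  have hm : ∀ f : Lp ℂ 2 (@haarAddCircle T hT),
      MemLp (fun x => (θ : AddCircle T → ℂ) x * (f : AddCircle T → ℂ) x) 2
        (@haarAddCircle T hT) := by
    intro f
    refine (Lp.memLp f).of_le ((Lp.aestronglyMeasurable θ).mul (Lp.aestronglyMeasurable f)) ?_
    filter_upwards [h] with x hx
    rw [norm_mul, hx, one_mul]
  refine ⟨{ toFun := fun f => (hm f).toLp _, map_add' := ?_, map_smul' := ?_, norm_map' := ?_ }, ?_⟩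
  · intro f g
    apply Lp.ext
    filter_upwards [(hm (f + g)).coeFn_toLp, (hm f).coeFn_toLp, (hm g).coeFn_toLp,
      Lp.coeFn_add ((hm f).toLp _) ((hm g).toLp _), Lp.coeFn_add f g] with x h1 h2 h3 h4 h5
    rw [h1, h4, Pi.add_apply, h2, h3, h5, Pi.add_apply]
    ring
  · intro c f
    apply Lp.ext
    filter_upwards [(hm (c • f)).coeFn_toLp, (hm f).coeFn_toLp,
      Lp.coeFn_smul c ((hm f).toLp _), Lp.coeFn_smul c f] with x h1 h2 h3 h4
    rw [h1, RingHom.id_apply, h3, Pi.smul_apply, h2, h4, Pi.smul_apply, smul_eq_mul, smul_eq_mul]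
    ring
  · intro f
    change ‖(hm f).toLp _‖ = ‖f‖
    rw [Lp.norm_def, Lp.norm_def]
    congr 1
    apply eLpNorm_congr_norm_ae
    filter_upwards [(hm f).coeFn_toLp, h] with x h1 h2
    rw [h1, norm_mul, h2, one_mul]
  · intro f
    exact (hm f).coeFn_toLp

/-- Continuous coefficient functional. -/
def cf (n : ℤ) : Lp ℂ 2 (@haarAddCircle T hT) →L[ℂ] ℂ :=
  innerSL ℂ ((@fourierBasis T hT) n)

lemma cf_eq (n : ℤ) (f : Lp ℂ 2 (@haarAddCircle T hT)) :
    cf n f = fourierBasis.repr f n := by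
  rw [HilbertBasis.repr_apply_apply]; rfl

lemma cf_basis (n m : ℤ) : cf n ((@fourierBasis T hT) m) = if n = m then 1 else 0 := by
  have := orthonormal_iff_ite.1 (@fourierBasis T hT).orthonormal n m
  simpa [cf] using this

lemma mem_hardy {f : Lp ℂ 2 (@haarAddCircle T hT)} :
    f ∈ hardySpace T ↔ ∀ n : ℤ, n < 0 → cf n f = 0 := by
  simp only [cf_eq]; rfl

lemma cf_norm (n : ℤ) (f : Lp ℂ 2 (@haarAddCircle T hT)) : ‖cf n f‖ ≤ ‖f‖ := by
  have h : ‖(@fourierBasis T hT) n‖ = 1 := (@fourierBasis T hT).orthonormal.1 n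
  have := norm_inner_le_norm (𝕜 := ℂ) ((@fourierBasis T hT) n) f
  rw [h, one_mul] at this
  exact this

lemma ext_eq (f : Lp ℂ 2 (@haarAddCircle T hT)) (z : ℂ) :
    extDisk T f z = ∑' n : ℕ, cf (n : ℤ) f * z ^ n := by
  simp only [cf_eq]; rfl

lemma summable_ext (f : Lp ℂ 2 (@haarAddCircle T hT)) {z : ℂ} (hz : ‖z‖ < 1) :
    Summable fun n : ℕ => ‖cf (n : ℤ) f * z ^ n‖ := by
  refine Summable.of_nonneg_of_le (fun _ => norm_nonneg _) (fun n => ?_)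
    ((summable_geometric_of_lt_one (norm_nonneg z) hz).mul_left ‖f‖)
  rw [norm_mul, norm_pow]
  exact mul_le_mul_of_nonneg_right (cf_norm _ _) (by positivity)

lemma ext_sub (f g : Lp ℂ 2 (@haarAddCircle T hT)) {z : ℂ} (hz : ‖z‖ < 1) :
    extDisk T (f - g) z = extDisk T f z - extDisk T g z := by
  simp only [ext_eq]
  rw [← (summable_ext f hz).of_norm.tsum_sub (summable_ext g hz).of_norm]
  congr 1; ext n
  rw [map_sub, sub_mul]

lemma ext_smul (c : ℂ) (f : Lp ℂ 2 (@haarAddCircle T hT)) (z : ℂ) :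
    extDisk T (c • f) z = c * extDisk T f z := by
  simp only [ext_eq]
  rw [← tsum_mul_left]
  congr 1; ext n
  rw [map_smul, smul_eq_mul, mul_assoc]

lemma ext_one (z : ℂ) : extDisk T ((@fourierBasis T hT) 0) z = 1 := by
  rw [ext_eq, tsum_eq_single 0]
  · rw [cf_basis]; simp
  · intro n hn
    rw [cf_basis]; simp [hn]

lemma one_ae : (((@fourierBasis T hT) 0 : Lp ℂ 2 (@haarAddCircle T hT)) : AddCircle T → ℂ)
    =ᵐ[@haarAddCircle T hT] fun _ => 1 := by
  rw [coe_fourierBasis]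
  filter_upwards [coeFn_fourierLp (T := T) 2 0] with x hx
  rw [hx, fourier_zero]

lemma one_mem : (@fourierBasis T hT) 0 ∈ hardySpace T := by
  rw [mem_hardy]
  intro n hn
  rw [cf_basis, if_neg hn.ne]

lemma cf_mul_basis (θ : Lp ℂ 2 (@haarAddCircle T hT)) (m n : ℤ)
    (g : Lp ℂ 2 (@haarAddCircle T hT))
    (hg : (g : AddCircle T → ℂ) =ᵐ[@haarAddCircle T hT] fun x => (θ : AddCircle T → ℂ) x *
      ((@fourierBasis T hT) m : AddCircle T → ℂ) x) : cf n g = cf (n - m) θ := by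
  rw [cf_eq, cf_eq, fourierBasis_repr, fourierBasis_repr, fourierCoeff, fourierCoeff]
  apply integral_congr_ae
  rw [coe_fourierBasis] at hg
  filter_upwards [hg, coeFn_fourierLp (T := T) 2 m] with x h1 h2
  rw [h1, h2, smul_eq_mul, smul_eq_mul, show -(n - m) = -n + m by ring, fourier_add]
  ring

variable {θ : Lp ℂ 2 (@haarAddCircle T hT)}
  {M : Lp ℂ 2 (@haarAddCircle T hT) →ₗᵢ[ℂ] Lp ℂ 2 (@haarAddCircle T hT)}

lemma hasSum_cf
    (hM : ∀ f : Lp ℂ 2 (@haarAddCircle T hT), (M f : AddCircle T → ℂ) =ᵐ[@haarAddCircle T hT]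
        fun x => (θ : AddCircle T → ℂ) x * (f : AddCircle T → ℂ) x)
    (f : Lp ℂ 2 (@haarAddCircle T hT)) (n : ℤ) :
    HasSum (fun i : ℤ => cf i f * cf (n - i) θ) (cf n (M f)) := by
  have h := (fourierBasis.hasSum_repr f).mapL ((cf n).comp M.toContinuousLinearMap)
  have hfun : (fun i : ℤ => cf i f * cf (n - i) θ) = fun i =>
      ((cf n).comp M.toContinuousLinearMap) (fourierBasis.repr f i • fourierBasis i) := by
    funext i
    rw [map_smul, smul_eq_mul, cf_eq i]
    congr 1
    exact (cf_mul_basis θ i n _ (hM _)).symm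
  rw [hfun]
  exact h

lemma M_hardy
    (hM : ∀ f : Lp ℂ 2 (@haarAddCircle T hT), (M f : AddCircle T → ℂ) =ᵐ[@haarAddCircle T hT]
        fun x => (θ : AddCircle T → ℂ) x * (f : AddCircle T → ℂ) x)
    (hθ : θ ∈ hardySpace T) {f : Lp ℂ 2 (@haarAddCircle T hT)} (hf : f ∈ hardySpace T) :
    M f ∈ hardySpace T := by
  rw [mem_hardy] at *
  intro n hn
  refine (hasSum_cf hM f n).unique ?_
  convert hasSum_zero using 2 with i
  rcases lt_or_ge i 0 with h | h
  · rw [hf i h, zero_mul]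
  · rw [hθ (n - i) (by lia), mul_zero]

lemma cf_M
    (hM : ∀ f : Lp ℂ 2 (@haarAddCircle T hT), (M f : AddCircle T → ℂ) =ᵐ[@haarAddCircle T hT]
        fun x => (θ : AddCircle T → ℂ) x * (f : AddCircle T → ℂ) x)
    (hθ : θ ∈ hardySpace T) {f : Lp ℂ 2 (@haarAddCircle T hT)} (hf : f ∈ hardySpace T) (n : ℕ) :
    cf (n : ℤ) (M f) = ∑ kl ∈ Finset.HasAntidiagonal.antidiagonal n, cf (kl.1 : ℤ) f * cf (kl.2 : ℤ) θ := by
  rw [mem_hardy] at *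
  have h2 := hasSum_cf hM f n
  have hz : ∀ i ∉ (Finset.range (n+1)).map Nat.castEmbedding,
      cf i f * cf ((n : ℤ) - i) θ = 0 := by
    intro i hi
    rcases lt_or_ge i 0 with h | h
    · rw [hf i h, zero_mul]
    · rw [hθ ((n : ℤ) - i) ?_, mul_zero]
      by_contra hc
      apply hi
      rw [Finset.mem_map]
      exact ⟨i.toNat, by rw [Finset.mem_range]; lia, by simpa using h⟩
  rw [h2.unique (hasSum_sum_of_ne_finset_zero hz), Finset.sum_map,
    Finset.Nat.sum_antidiagonal_eq_sum_range_succ_mk]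
  apply Finset.sum_congr rfl
  intro i hi
  rw [Finset.mem_range] at hi
  simp only [Nat.castEmbedding_apply]
  rw [Nat.cast_sub (by lia)]

lemma ext_M
    (hM : ∀ f : Lp ℂ 2 (@haarAddCircle T hT), (M f : AddCircle T → ℂ) =ᵐ[@haarAddCircle T hT]
        fun x => (θ : AddCircle T → ℂ) x * (f : AddCircle T → ℂ) x)
    (hθ : θ ∈ hardySpace T) {f : Lp ℂ 2 (@haarAddCircle T hT)} (hf : f ∈ hardySpace T)
    {z : ℂ} (hz : ‖z‖ < 1) :
    extDisk T (M f) z = extDisk T f z * extDisk T θ z := by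
  rw [ext_eq, ext_eq, ext_eq,
    tsum_mul_tsum_eq_tsum_sum_antidiagonal_of_summable_norm (summable_ext f hz) (summable_ext θ hz)]
  congr 1; ext n
  rw [cf_M hM hθ hf, Finset.sum_mul]
  apply Finset.sum_congr rfl
  intro kl hkl
  rw [Finset.HasAntidiagonal.mem_antidiagonal] at hkl
  rw [← hkl, pow_add]; ring

/-- Neumann series inverse of `1 - b M`, preserving the Hardy space. -/
lemma exists_inv
    (hM : ∀ f ∈ hardySpace T, M f ∈ hardySpace T) {b : ℂ} (hb : ‖b‖ < 1) :
    ∃ R : Lp ℂ 2 (@haarAddCircle T hT) → Lp ℂ 2 (@haarAddCircle T hT),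
      (∀ f, R f - b • M (R f) = f) ∧ (∀ f, R (f - b • M f) = f) ∧
      ∀ f ∈ hardySpace T, R f ∈ hardySpace T := by
  set A : Lp ℂ 2 (@haarAddCircle T hT) →L[ℂ] Lp ℂ 2 (@haarAddCircle T hT) :=
    b • M.toContinuousLinearMap with hA
  have hAn : ‖A‖ < 1 := by
    rw [hA, norm_smul]
    calc ‖b‖ * ‖M.toContinuousLinearMap‖ ≤ ‖b‖ * 1 :=
          mul_le_mul_of_nonneg_left M.norm_toContinuousLinearMap_le (norm_nonneg _)
      _ < 1 := by rwa [mul_one]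
  refine ⟨fun f => (∑' i : ℕ, A ^ i) f, ?_, ?_, ?_⟩
  · intro f
    have := congrArg (fun L => L f) (mul_neg_geom_series A hAn)
    simp only [mul_apply_eq_comp, _root_.sub_apply,
      one_apply_eq_self] at this
    exact this
  · intro f
    have := congrArg (fun L => L f) (geom_series_mul_neg A hAn)
    simp only [mul_apply_eq_comp, _root_.sub_apply,
      one_apply_eq_self] at this
    exact this
  · intro f hf
    have hp : ∀ i : ℕ, (A ^ i) f ∈ hardySpace T := by
      intro i
      induction i with
      | zero => simpa using hf
      | succ k ih =>
        rw [pow_succ']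
        exact Submodule.smul_mem _ _ (hM _ ih)
    rw [mem_hardy]
    intro n hn
    have h1 := (summable_geometric_of_norm_lt_one hAn).hasSum
    have h2 := (h1.mapL (ContinuousLinearMap.apply ℂ _ f)).mapL (cf n)
    refine h2.unique ?_
    convert hasSum_zero using 2 with i
    exact mem_hardy.1 (hp i) n hn

lemma crofoot_alg {s a b w t D E : ℂ} (hs : s ≠ 0) (hD : D ≠ 0) (hE : E ≠ 0)
    (eD : D = 1 - b * w) (eE : E = 1 - a * t) (hss : s ^ 2 = 1 - a * b) :
    s / D * (1 - t * w) = E / s * (1 - (t - b) / E * ((w - a) / D)) := by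
  field_simp
  rw [hss, eD, eE]; ring

end aux

/-- The Frostman shift `Θ = (θ - θ(0))/(1 - conj(θ(0))θ)` of an inner function `θ` is inner with
`Θ(0) = 0`, and the Crofoot transform `J : f ↦ (√(1-|θ(0)|²)/(1 - conj(θ(0))θ)) f` is a unitary
map of `K_θ` onto `K_Θ` with `J k_λ = ((1 - θ(0)conj(θ(λ)))/√(1-|θ(0)|²)) k_λ^Θ`. -/
theorem stmt16 (T : ℝ) [hT : Fact (0 < T)] (θ : Lp ℂ 2 (@haarAddCircle T hT))
    (hθ : IsInner T θ) (hθ00 : ‖extDisk T θ 0‖ < 1)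
    (Θ : Lp ℂ 2 (@haarAddCircle T hT))
    (hΘ : (Θ : AddCircle T → ℂ) =ᵐ[@haarAddCircle T hT] fun x =>
      ((θ : AddCircle T → ℂ) x - extDisk T θ 0) /
        (1 - conj (extDisk T θ 0) * (θ : AddCircle T → ℂ) x))
    (J : Lp ℂ 2 (@haarAddCircle T hT) →ₗ[ℂ] Lp ℂ 2 (@haarAddCircle T hT))
    (hJ : ∀ f : Lp ℂ 2 (@haarAddCircle T hT),
      ((J f : Lp ℂ 2 (@haarAddCircle T hT)) : AddCircle T → ℂ) =ᵐ[@haarAddCircle T hT]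
        fun x => ((Real.sqrt (1 - ‖extDisk T θ 0‖ ^ 2) : ℂ) /
          (1 - conj (extDisk T θ 0) * (θ : AddCircle T → ℂ) x)) * (f : AddCircle T → ℂ) x) :
    IsInner T Θ ∧ extDisk T Θ 0 = 0 ∧
    (∀ f ∈ modelSpace T θ, J f ∈ modelSpace T Θ ∧ ‖J f‖ = ‖f‖) ∧
    (∀ g ∈ modelSpace T Θ, ∃ f ∈ modelSpace T θ, J f = g) ∧
    (∀ lam : ℂ, ‖lam‖ < 1 →
      ∀ klam klamΘ : Lp ℂ 2 (@haarAddCircle T hT),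
        ((klam : AddCircle T → ℂ) =ᵐ[@haarAddCircle T hT] fun x =>
          (1 - conj (extDisk T θ lam) * (θ : AddCircle T → ℂ) x) /
            (1 - conj lam * fourier 1 x)) →
        ((klamΘ : AddCircle T → ℂ) =ᵐ[@haarAddCircle T hT] fun x =>
          (1 - conj (extDisk T Θ lam) * (Θ : AddCircle T → ℂ) x) /
            (1 - conj lam * fourier 1 x)) →
        J klam = ((1 - extDisk T θ 0 * conj (extDisk T θ lam)) /
          (Real.sqrt (1 - ‖extDisk T θ 0‖ ^ 2) : ℂ)) • klamΘ) := by
  obtain ⟨hθH, hθn⟩ := hθ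
  obtain ⟨M, hM⟩ := exists_mulOp θ hθn
  have hMH : ∀ f ∈ hardySpace T, M f ∈ hardySpace T := fun f hf => M_hardy hM hθH hf
  have hz0 : ‖(0 : ℂ)‖ < 1 := by simp
  generalize ha : extDisk T θ 0 = a at *
  have hca : ‖conj a‖ < 1 := by rwa [RCLike.norm_conj]
  obtain ⟨R, hR1, hR2, hR3⟩ := exists_inv hMH hca
  have hD : ∀ w : ℂ, ‖w‖ = 1 → 1 - conj a * w ≠ 0 := by
    intro w hw h0
    have : ‖conj a * w‖ = 1 := by rw [← sub_eq_zero.1 h0, norm_one]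
    rw [norm_mul, hw, mul_one] at this
    linarith
  have hs2 : 0 < 1 - ‖a‖ ^ 2 := by nlinarith [norm_nonneg a]
  set s : ℝ := Real.sqrt (1 - ‖a‖ ^ 2) with hs
  have hspos : 0 < s := Real.sqrt_pos.2 hs2
  have hss : s ^ 2 = 1 - ‖a‖ ^ 2 := Real.sq_sqrt hs2.le
  have hsC : (s : ℂ) ≠ 0 := by exact_mod_cast hspos.ne'
  have haa : a * conj a = (‖a‖ : ℂ) ^ 2 := Complex.mul_conj' a
  have hssC : (s : ℂ) ^ 2 = 1 - a * conj a := by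
    rw [haa]; exact_mod_cast hss
  -- pointwise formula for `1 - conj a M`
  have hDf : ∀ f : Lp ℂ 2 (@haarAddCircle T hT), ((f - conj a • M f :
      Lp ℂ 2 (@haarAddCircle T hT)) : AddCircle T → ℂ) =ᵐ[@haarAddCircle T hT]
      fun x => (1 - conj a * (θ : AddCircle T → ℂ) x) * (f : AddCircle T → ℂ) x := by
    intro f
    filter_upwards [Lp.coeFn_sub f (conj a • M f), Lp.coeFn_smul (conj a) (M f), hM f]
      with x h1 h2 h3
    rw [h1, Pi.sub_apply, h2, Pi.smul_apply, h3, smul_eq_mul]; ring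
  have hNf : ∀ f : Lp ℂ 2 (@haarAddCircle T hT), ((M f - a • f :
      Lp ℂ 2 (@haarAddCircle T hT)) : AddCircle T → ℂ) =ᵐ[@haarAddCircle T hT]
      fun x => ((θ : AddCircle T → ℂ) x - a) * (f : AddCircle T → ℂ) x := by
    intro f
    filter_upwards [Lp.coeFn_sub (M f) (a • f), Lp.coeFn_smul a f, hM f]
      with x h1 h2 h3
    rw [h1, Pi.sub_apply, h2, Pi.smul_apply, h3, smul_eq_mul]; ring
  -- `Θ (1 - conj a M) g = (M - a) g`
  have hΘD : ∀ g : Lp ℂ 2 (@haarAddCircle T hT), ((M g - a • g :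
      Lp ℂ 2 (@haarAddCircle T hT)) : AddCircle T → ℂ) =ᵐ[@haarAddCircle T hT]
      fun x => (Θ : AddCircle T → ℂ) x * ((g - conj a • M g :
        Lp ℂ 2 (@haarAddCircle T hT)) : AddCircle T → ℂ) x := by
    intro g
    filter_upwards [hNf g, hDf g, hΘ, hθn] with x h1 h2 h3 h4
    have := hD _ h4
    rw [h1, h2, h3, ← mul_assoc, div_mul_cancel₀ _ this]
  have hJR : ∀ f, J f = (s : ℂ) • R f := by
    intro f
    apply Lp.ext
    have h0 := hDf (R f)
    rw [hR1] at h0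
    filter_upwards [hJ f, h0, Lp.coeFn_smul (s : ℂ) (R f), hθn] with x h1 h2 h3 h4
    have := hD _ h4
    rw [h1, h2, h3, Pi.smul_apply, smul_eq_mul]; field_simp
  set e : Lp ℂ 2 (@haarAddCircle T hT) := (@fourierBasis T hT) 0 with he
  have heH : e ∈ hardySpace T := one_mem
  have hMe : M e = θ := by
    apply Lp.ext
    filter_upwards [hM e, one_ae (T := T)] with x h1 h2
    rw [h1, h2, mul_one]
  have hΘeq : Θ - conj a • M Θ = θ - a • e := by
    apply Lp.ext
    have h0 := hNf e
    rw [hMe] at h0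
    filter_upwards [hDf Θ, h0, one_ae (T := T), hΘ, hθn] with x h1 h2 h3 h4 h5
    have := hD _ h5
    rw [h1, h2, h3, h4]; field_simp
  have hΘH : Θ ∈ hardySpace T := by
    rw [← hR2 Θ, hΘeq]
    exact hR3 _ (sub_mem hθH (Submodule.smul_mem _ _ heH))
  have hext : ∀ z : ℂ, ‖z‖ < 1 →
      extDisk T Θ z * (1 - conj a * extDisk T θ z) = extDisk T θ z - a ∧
      1 - conj a * extDisk T θ z ≠ 0 := by
    intro z hz
    constructor
    · have := congrArg (fun f => extDisk T f z) hΘeq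
      simp only [ext_sub _ _ hz, ext_smul, ext_M hM hθH hΘH hz] at this
      rw [he, ext_one] at this
      linear_combination this
    · have := congrArg (fun f => extDisk T f z) (hR1 e)
      simp only [ext_sub _ _ hz, ext_smul, ext_M hM hθH (hR3 e heH) hz] at this
      rw [he, ext_one] at this
      intro h0
      have h1 : extDisk T (R (fourierBasis 0)) z * (1 - conj a * extDisk T θ z) = 1 := by
        linear_combination this
      rw [h0, mul_zero] at h1
      exact zero_ne_one h1
  -- key adjoint identity
  have hadj : ∀ h u : Lp ℂ 2 (@haarAddCircle T hT),
      inner ℂ (M h) (u - conj a • M u) = inner ℂ (M h - a • h) u := by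
    intro h u
    rw [inner_sub_right, inner_sub_left, inner_smul_right, inner_smul_left,
      LinearIsometry.inner_map_map]
  have hMmem : ∀ h ∈ hardySpace T, M h ∈ thetaH2 T θ := fun h hh => ⟨h, hh, hM h⟩
  refine ⟨⟨hΘH, ?_⟩, ?_, ?_, ?_, ?_⟩
  · filter_upwards [hΘ, hθn] with x h1 h2
    have h3 := hD _ h2
    have h4 : ‖(θ : AddCircle T → ℂ) x - a‖ = ‖1 - conj a * (θ : AddCircle T → ℂ) x‖ := by
      have h5 : (θ : AddCircle T → ℂ) x * conj ((θ : AddCircle T → ℂ) x) = 1 := by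
        rw [Complex.mul_conj', h2]; simp
      have h6 : (θ : AddCircle T → ℂ) x - a =
          (θ : AddCircle T → ℂ) x * conj (1 - conj a * (θ : AddCircle T → ℂ) x) := by
        simp only [map_sub, map_one, map_mul, Complex.conj_conj]
        linear_combination a * h5
      rw [h6, norm_mul, h2, one_mul, RCLike.norm_conj]
    rw [h1, norm_div, h4, div_self (norm_ne_zero_iff.2 h3)]
  · obtain ⟨h1, h2⟩ := hext 0 hz0
    rw [ha] at h1 h2
    rw [sub_self] at h1
    exact (mul_eq_zero.1 h1).resolve_right h2
  · rintro f ⟨hfH, hfo⟩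
    have hfo' := (Submodule.mem_orthogonal _ _).1 hfo
    refine ⟨⟨?_, ?_⟩, ?_⟩
    · rw [hJR]; exact Submodule.smul_mem _ _ (hR3 f hfH)
    · refine (Submodule.mem_orthogonal _ _).2 ?_
      rintro G ⟨g, hg, hG⟩
      have hGe : G = M (R g) - a • R g := by
        apply Lp.ext
        have h0 := hΘD (R g)
        rw [hR1] at h0
        exact hG.trans h0.symm
      rw [hJR, inner_smul_right, hGe, ← hadj, hR1, hfo' _ (hMmem _ (hR3 g hg)), mul_zero]
    · have hu : inner ℂ (M (R f) - a • R f) (R f) = 0 := by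
        rw [← hadj, hR1, hfo' _ (hMmem _ (hR3 f hfH))]
      have hf2 : inner ℂ f f = (1 - a * conj a) * inner ℂ (R f) (R f) := by
        have hMu : inner ℂ (M (R f)) (R f) = conj a * inner ℂ (R f) (R f) := by
          rw [inner_sub_left, inner_smul_left] at hu
          exact sub_eq_zero.1 hu
        have hMf : inner ℂ (M (R f)) f = 0 := hfo' _ (hMmem _ (hR3 f hfH))
        have huM : inner ℂ (R f) (M (R f)) = a * inner ℂ (R f) (R f) := by
          rw [← inner_conj_symm, hMu, map_mul, Complex.conj_conj, inner_conj_symm]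
        calc inner ℂ f f = inner ℂ (R f - conj a • M (R f)) f := by rw [hR1]
          _ = inner ℂ (R f) f := by
            rw [inner_sub_left, inner_smul_left, hMf, mul_zero, sub_zero]
          _ = inner ℂ (R f) (R f - conj a • M (R f)) := by rw [hR1]
          _ = _ := by
            rw [inner_sub_right, inner_smul_right, huM]; ring
      rw [inner_self_eq_norm_sq_to_K, inner_self_eq_norm_sq_to_K, ← hssC] at hf2
      have hf3 : ‖f‖ ^ 2 = s ^ 2 * ‖R f‖ ^ 2 := by
        apply Complex.ofReal_injective
        push_cast
        exact hf2
      rw [hJR, norm_smul, Complex.norm_real, Real.norm_of_nonneg hspos.le]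
      refine (pow_left_inj₀ (by positivity) (norm_nonneg _) two_ne_zero).1 ?_
      rw [hf3]; ring
  · rintro g ⟨hgH, hgo⟩
    have hgo' := (Submodule.mem_orthogonal _ _).1 hgo
    refine ⟨(s : ℂ)⁻¹ • (g - conj a • M g), ⟨?_, ?_⟩, ?_⟩
    · exact Submodule.smul_mem _ _ (sub_mem hgH (Submodule.smul_mem _ _ (hMH g hgH)))
    · refine (Submodule.mem_orthogonal _ _).2 ?_
      rintro G ⟨h, hh, hG⟩
      have hGe : G = M h := Lp.ext (hG.trans (hM h).symm)
      rw [inner_smul_right, hGe, hadj, hgo' _ ?_, mul_zero]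
      exact ⟨h - conj a • M h, sub_mem hh (Submodule.smul_mem _ _ (hMH h hh)), hΘD h⟩
    · rw [map_smul, hJR, hR2, smul_smul, inv_mul_cancel₀ hsC, one_smul]
  · intro lam hlam k kΘ hk hkΘ
    obtain ⟨h1, h2⟩ := hext lam hlam
    generalize extDisk T θ lam = t at *
    have h2' : 1 - a * conj t ≠ 0 := by
      intro h0
      apply h2
      have := congrArg conj h0
      simpa using this
    have h1' : conj (extDisk T Θ lam) = (conj t - conj a) / (1 - a * conj t) := by
      rw [eq_div_iff h2']
      have := congrArg conj h1
      simpa using this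
    rw [h1'] at hkΘ
    apply Lp.ext
    filter_upwards [hJ k, hk, hkΘ, hΘ, hθn, Lp.coeFn_smul ((1 - a * conj t) / (s : ℂ)) kΘ]
      with x e1 e2 e3 e4 e5 e6
    have h3 := hD _ e5
    rw [e1, e2, e6, Pi.smul_apply, e3, e4, smul_eq_mul, ← mul_div_assoc, ← mul_div_assoc]
    congr 1
    exact crofoot_alg hsC h3 h2' rfl rfl hssC

end
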